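/- Let $0 < p < 1$, let $\alpha > 0$, and let $(m_n)$ be a sequence of positive integers with $m_n \to \infty$ and $\frac{m_n^2 \log\log n}{\log n} \to 0$. For a real number $x$, define $\Psi_{\alpha}(m) = \alpha \log_{1/p} n + (m-1)\log_{1/p}\frac{1-p}{p}$ and $\phi(n) = \alpha \log_{1/p} n + (m_n-1)\log_{1/p}\left(\frac{1-p}{p}\Psi_{\alpha}(m_n)\right) - \log_{1/p}((m_n-1)!) + x$. Let $\bar F_c(y \mid m, p) = \frac{B(p;\, y-m+1,\, m)}{B(y-m+1,\, m)}$ where $B(p; a, b)$ is the incomplete beta function and $B(a,b)$ the beta function. Then $n^{\alpha}\, \bar F_c(\phi(n) \mid m_n, p) \to p^x$ as $n \to \infty$. -/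

import Mathlib

/-!
Put `M = m - 1` and `a = φ(n) - M`. Since `m` is an integer, the tail is a finite sum even for real
`a`:
`F̄_c = p ^ a * ∑ j ≤ M, (a)_j / j! * (1 - p) ^ j` (`FcBar_eq`), because the right-hand side,
as a function of `p`, is an antiderivative of a multiple of the beta integrand and equals `1` at
`p = 1`. As `M / a → 0`, the summand `j = M` dominates (`tailSum_ge`, `tailSum_le`), and `φ(n)` is
chosen so that `n ^ α` times this summand is exactly `p ^ x * ∏ i < M, (a + i) / Ψ` (`main_term`).
The product lies between `1 + M (a - Ψ) / Ψ` and `exp (M (a - Ψ) / Ψ + M² / Ψ)`. Here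
`Ψ` is asymptotic to `α log_{1/p} n` and `a - Ψ = O(M log log n)`, so the growth condition on `m`
sends both bounds to `1` (`asymptotics`).
-/

/-- The incomplete beta function `B(x; a, b) = ∫₀ˣ t^(a-1) (1-t)^(b-1) dt`. -/
noncomputable def incBeta (x a b : ℝ) : ℝ :=
  ∫ t in (0 : ℝ)..x, t ^ (a - 1) * (1 - t) ^ (b - 1)

/-- The continuous tail `F̄_c(y | m, p) = B(p; y-m+1, m) / B(y-m+1, m)` interpolating
the `NB(m,p)` tail. -/
noncomputable def FcBar (p : ℝ) (m : ℕ) (y : ℝ) : ℝ :=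
  incBeta p (y - m + 1) m / incBeta 1 (y - m + 1) m

/-- `Ψ_α(m) = α log_{1/p} n + (m-1) log_{1/p} ((1-p)/p)`. -/
noncomputable def PsiA (p α : ℝ) (n : ℕ) (m : ℕ) : ℝ :=
  α * Real.logb (1 / p) n + ((m : ℝ) - 1) * Real.logb (1 / p) ((1 - p) / p)

/-- `φ(n) = α log_{1/p} n + (m_n-1) log_{1/p} ((1-p)/p · Ψ_α(m_n)) - log_{1/p} (m_n-1)! + x`. -/
noncomputable def phiFun (p α x : ℝ) (m : ℕ → ℕ) (n : ℕ) : ℝ :=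
  α * Real.logb (1 / p) n +
    ((m n : ℝ) - 1) * Real.logb (1 / p) ((1 - p) / p * PsiA p α n (m n)) -
    Real.logb (1 / p) (Nat.factorial (m n - 1)) + x

/-! ### The tail as a finite sum -/

/-- The coefficient `(a)_j / j!`, with `(a)_j = a (a+1) ⋯ (a+j-1)` the rising factorial. -/
noncomputable def riseCoeff (a : ℝ) (j : ℕ) : ℝ :=
  (∏ i ∈ Finset.range j, (a + i)) / (Nat.factorial j : ℝ)

lemma riseCoeff_succ (a : ℝ) (j : ℕ) :
    ((j : ℝ) + 1) * riseCoeff a (j + 1) = (a + j) * riseCoeff a j := by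
  unfold riseCoeff
  rw [Finset.prod_range_succ, Nat.factorial_succ]
  have := Nat.factorial_ne_zero j
  push_cast
  field_simp

lemma riseCoeff_pos {a : ℝ} (ha : 0 < a) (j : ℕ) : 0 < riseCoeff a j := by
  unfold riseCoeff
  have : 0 < ∏ i ∈ Finset.range j, (a + (i : ℝ)) := Finset.prod_pos fun i _ => by positivity
  positivity

/-- The sum telescopes under differentiation, which makes it an antiderivative of a constant
multiple of the beta integrand. -/
lemma hasDerivAt_tailSum {a : ℝ} (ha : 1 < a) (M : ℕ) {t : ℝ} (ht : 0 ≤ t) :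
    HasDerivAt (fun t : ℝ => t ^ a * ∑ j ∈ Finset.range (M + 1), riseCoeff a j * (1 - t) ^ j)
      (((M : ℝ) + 1) * riseCoeff a (M + 1) * (t ^ (a - 1) * (1 - t) ^ M)) t := by
  have hpow : HasDerivAt (fun t : ℝ => t ^ a) (a * t ^ (a - 1)) t :=
    Real.hasDerivAt_rpow_const (Or.inr ha.le)
  have hta : t ^ a = t ^ (a - 1) * t := by
    rw [← Real.rpow_add_one' ht (by linarith)]; simp
  have hlin : HasDerivAt (fun t : ℝ => 1 - t) (-1) t := by
    simpa using (hasDerivAt_id t).const_sub 1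
  induction M with
  | zero =>
    have h := riseCoeff_succ a 0
    have h0 : riseCoeff a 0 = 1 := by simp [riseCoeff]
    simp only [h0] at h
    simp only [zero_add, Finset.sum_range_one, pow_zero, h0, mul_one]
    convert hpow using 1
    simp only [Nat.cast_zero, zero_add, add_zero, mul_one] at h ⊢
    rw [h]
  | succ M ih =>
    have h2 := (hpow.mul ((hlin.pow (M + 1)).const_mul (riseCoeff a (M + 1))))
    have h3 := ih.add h2
    have hc := riseCoeff_succ a (M + 1)
    have e : (fun t : ℝ => t ^ a * ∑ j ∈ Finset.range (M + 1 + 1), riseCoeff a j * (1 - t) ^ j) =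
        (fun t => t ^ a * ∑ j ∈ Finset.range (M + 1), riseCoeff a j * (1 - t) ^ j) +
        (fun t => t ^ a) * fun y => riseCoeff a (M + 1) * ((fun t => 1 - t) ^ (M + 1)) y := by
      funext s
      rw [Finset.sum_range_succ _ (M + 1)]
      simp only [Pi.add_apply, Pi.mul_apply, Pi.pow_apply]
      ring
    rw [e]
    refine h3.congr_deriv ?_
    rw [hc, hta]
    simp only [Pi.pow_apply, Nat.add_sub_cancel]
    push_cast
    ring

lemma incBeta_eq {a : ℝ} (ha : 1 < a) (M : ℕ) {z : ℝ} (hz : 0 ≤ z) :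
    ((M : ℝ) + 1) * riseCoeff a (M + 1) * incBeta z a ((M + 1 : ℕ) : ℝ) =
      z ^ a * ∑ j ∈ Finset.range (M + 1), riseCoeff a j * (1 - z) ^ j := by
  have hI : incBeta z a ((M + 1 : ℕ) : ℝ) = ∫ t in (0 : ℝ)..z, t ^ (a - 1) * (1 - t) ^ M := by
    unfold incBeta
    simp only [Nat.cast_add, Nat.cast_one, add_sub_cancel_right, Real.rpow_natCast]
  rw [hI, ← intervalIntegral.integral_const_mul]
  rw [intervalIntegral.integral_eq_sub_of_hasDerivAt
    (f := fun t : ℝ => t ^ a * ∑ j ∈ Finset.range (M + 1), riseCoeff a j * (1 - t) ^ j)]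
  · simp [Real.zero_rpow (by linarith : a ≠ 0)]
  · intro t ht
    rw [Set.uIcc_of_le hz] at ht
    exact hasDerivAt_tailSum ha M ht.1
  · apply Continuous.intervalIntegrable
    have : Continuous fun t : ℝ => t ^ (a - 1) :=
      Real.continuous_rpow_const (by linarith)
    fun_prop

/-- The negative binomial tail as a finite sum, for all real `y > M + 1`. -/
lemma FcBar_eq {p : ℝ} (hp : 0 < p) (M : ℕ) {y : ℝ} (ha : 1 < y - M) :
    FcBar p (M + 1) y =
      p ^ (y - M) * ∑ j ∈ Finset.range (M + 1), riseCoeff (y - M) j * (1 - p) ^ j := by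
  have h1 := incBeta_eq ha M hp.le
  have h2 := incBeta_eq ha M zero_le_one
  rw [Finset.sum_range_succ'] at h2
  have h0 : riseCoeff (y - M) 0 = 1 := by simp [riseCoeff]
  simp [h0] at h2
  have hc : 0 < ((M : ℝ) + 1) * riseCoeff (y - M) (M + 1) :=
    mul_pos (by positivity) (riseCoeff_pos (by linarith) _)
  unfold FcBar
  have e : y - ((M + 1 : ℕ) : ℝ) + 1 = y - M := by push_cast; ring
  rw [e, ← h1]
  push_cast at h2 ⊢
  have hne : incBeta 1 (y - M) ((M : ℝ) + 1) ≠ 0 := by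
    intro h; rw [h] at h2; simp at h2
  rw [div_eq_iff hne]
  linear_combination (-incBeta p (y - M) ((M : ℝ) + 1)) * h2

/-! ### Bounds for the sum and for its last term -/

lemma tailSum_ge {a q : ℝ} (ha : 0 < a) (hq : 0 < q) (M : ℕ) :
    riseCoeff a M * q ^ M ≤ ∑ j ∈ Finset.range (M + 1), riseCoeff a j * q ^ j := by
  refine Finset.single_le_sum (f := fun j => riseCoeff a j * q ^ j) (fun j _ => ?_) (by simp)
  have := riseCoeff_pos ha j
  positivity

/-- Consecutive terms satisfy `T_j ≤ r T_{j+1}` for `j < M`, so the sum is dominated by a geometric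
series ending in its last term. -/
lemma tailSum_le {a q r : ℝ} (ha : 0 < a) (hq : 0 < q) (M : ℕ) (hr1 : r < 1)
    (hr : (M : ℝ) ≤ r * (a * q)) :
    ∑ j ∈ Finset.range (M + 1), riseCoeff a j * q ^ j ≤ riseCoeff a M * q ^ M / (1 - r) := by
  have hr0 : 0 ≤ r := by
    by_contra! h
    have : (0 : ℝ) ≤ M := by positivity
    nlinarith [mul_pos ha hq]
  have h1r : 0 < 1 - r := by linarith
  have key : ∀ k ≤ M, ∑ j ∈ Finset.range (k + 1), riseCoeff a j * q ^ j ≤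
      riseCoeff a k * q ^ k / (1 - r) := by
    intro k
    induction k with
    | zero =>
      intro _
      simp only [zero_add, Finset.sum_range_one, pow_zero, mul_one]
      rw [le_div_iff₀ h1r]
      nlinarith [riseCoeff_pos ha 0]
    | succ k ih =>
      intro hk
      rw [Finset.sum_range_succ]
      have hstep : riseCoeff a k * q ^ k ≤ r * (riseCoeff a (k + 1) * q ^ (k + 1)) := by
        have hc := riseCoeff_succ a k
        have hk' : (k : ℝ) + 1 ≤ M := by exact_mod_cast hk
        have h3 : (k : ℝ) + 1 ≤ r * ((a + k) * q) := by
          have : 0 ≤ r * (k * q) := by positivity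
          nlinarith
        have h4 : 0 < riseCoeff a k * q ^ k := mul_pos (riseCoeff_pos ha k) (by positivity)
        have h5 := mul_le_mul_of_nonneg_right h3 h4.le
        have h6 : ((k : ℝ) + 1) * (riseCoeff a k * q ^ k) ≤
            ((k : ℝ) + 1) * (r * (riseCoeff a (k + 1) * q ^ (k + 1))) := by
          refine h5.trans (le_of_eq ?_)
          rw [pow_succ]
          linear_combination (-(r * q ^ k * q)) * hc
        exact le_of_mul_le_mul_left h6 (by positivity)
      have := ih (by omega)
      rw [le_div_iff₀ h1r] at this ⊢
      nlinarith
  exact key M le_rfl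

lemma prod_ge {a P : ℝ} (ha : 0 < a) (hP : 0 < P) (M : ℕ) :
    1 + M * ((a - P) / P) ≤ ∏ i ∈ Finset.range M, ((a + i) / P) := by
  have h1 : 1 + (M : ℝ) * ((a - P) / P) ≤ (1 + (a - P) / P) ^ M := by
    apply one_add_mul_le_pow
    have : (a - P) / P = a / P - 1 := by field_simp
    have : 0 < a / P := by positivity
    linarith
  refine h1.trans ?_
  have h2 : (1 + (a - P) / P) ^ M = ∏ i ∈ Finset.range M, (a / P) := by
    rw [Finset.prod_const, Finset.card_range]; congr 1; field_simp; ring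
  rw [h2]
  refine Finset.prod_le_prod (fun i _ => by positivity) (fun i _ => ?_)
  gcongr
  simp

lemma prod_le {a P : ℝ} (ha : 0 < a) (hP : 0 < P) (M : ℕ) :
    ∏ i ∈ Finset.range M, ((a + i) / P) ≤ Real.exp (M * ((a - P) / P) + (M : ℝ) ^ 2 / P) := by
  have h2 : Real.exp (M * ((a - P) / P) + (M : ℝ) ^ 2 / P) =
      ∏ i ∈ Finset.range M, Real.exp ((a - P + M) / P) := by
    rw [Finset.prod_const, Finset.card_range, ← Real.exp_nat_mul]; congr 1; field_simp
  rw [h2]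
  refine Finset.prod_le_prod (fun i _ => by positivity) (fun i hi => ?_)
  have hi' : (i : ℝ) ≤ M := by exact_mod_cast (Finset.mem_range.mp hi).le
  have : (a + i) / P ≤ (a - P + M) / P + 1 := by
    rw [div_add_one hP.ne']
    apply div_le_div_of_nonneg_right _ hP.le
    linarith
  exact this.trans (Real.add_one_le_exp _)

lemma rpow_logb_inv {p z : ℝ} (hp : 0 < p) (hp1 : p < 1) (hz : 0 < z) :
    p ^ Real.logb (1 / p) z = z⁻¹ := by
  have : Real.logb (1 / p) z = -Real.logb p z := by
    rw [one_div, Real.logb_inv_base]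
  rw [this, Real.rpow_neg hp.le, Real.rpow_logb hp hp1.ne hz]

/-- The normalisation `φ(n)` is chosen so that the last summand of the tail is `p ^ x` times a
product of `M` factors close to `1`. -/
lemma main_term {p α x N P y : ℝ} (hp : 0 < p) (hp1 : p < 1) (M : ℕ) (hN : 0 < N) (hP : 0 < P)
    (hy : y = α * Real.logb (1 / p) N + M * Real.logb (1 / p) ((1 - p) / p * P) -
      Real.logb (1 / p) (Nat.factorial M) + x) :
    N ^ α * (p ^ (y - M) * (riseCoeff (y - M) M * (1 - p) ^ M)) =
      p ^ x * ∏ i ∈ Finset.range M, ((y - M + i) / P) := by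
  have hq : 0 < 1 - p := by linarith
  have e1 : p ^ (α * Real.logb (1 / p) N) = (N ^ α)⁻¹ := by
    rw [mul_comm, Real.rpow_mul hp.le, rpow_logb_inv hp hp1 hN, Real.inv_rpow hN.le]
  have e2 : p ^ (M * Real.logb (1 / p) ((1 - p) / p * P)) = (((1 - p) / p * P) ^ M)⁻¹ := by
    rw [mul_comm, Real.rpow_mul hp.le, rpow_logb_inv hp hp1 (by positivity), Real.rpow_natCast,
      inv_pow]
  have e3 : p ^ (Real.logb (1 / p) (Nat.factorial M)) = ((Nat.factorial M : ℝ))⁻¹ :=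
    rpow_logb_inv hp hp1 (by positivity)
  have e4 : p ^ (y - M) =
      (N ^ α)⁻¹ * (((1 - p) / p * P) ^ M)⁻¹ * (Nat.factorial M : ℝ) * p ^ x / p ^ M := by
    rw [Real.rpow_sub hp, hy, Real.rpow_add hp, Real.rpow_sub hp, Real.rpow_add hp, e1, e2, e3,
      Real.rpow_natCast, div_inv_eq_mul]
  have hNα : 0 < N ^ α := by positivity
  rw [e4, riseCoeff, Finset.prod_div_distrib, Finset.prod_const, Finset.card_range]
  have := Nat.factorial_ne_zero M
  rw [mul_pow, div_pow]
  field_simp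

/-! ### Growth rates and the limit -/

open Filter Topology in
/-- With `M = m - 1` and `a = φ(n) - M`, the relative error of replacing the `M` factors of the
rising factorial of `a` by `Ψ` has total size `M (a - Ψ) / Ψ + M² / Ψ = O(M² log log n / log n)`. -/
lemma asymptotics {p α x : ℝ} (hp : 0 < p) (hp1 : p < 1) (hα : 0 < α) (M : ℕ → ℕ)
    (hm2 : Tendsto (fun n : ℕ => ((M n + 1 : ℕ) : ℝ) ^ 2 * Real.log (Real.log n) / Real.log n)
      atTop (𝓝 0)) :
    Tendsto (fun n => PsiA p α n (M n + 1)) atTop atTop ∧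
    Tendsto (fun n => (M n : ℝ) / PsiA p α n (M n + 1)) atTop (𝓝 0) ∧
    Tendsto (fun n => (M n : ℝ) ^ 2 / PsiA p α n (M n + 1)) atTop (𝓝 0) ∧
    Tendsto (fun n => (M n : ℝ) * ((phiFun p α x (fun k => M k + 1) n - M n -
      PsiA p α n (M n + 1)) / PsiA p α n (M n + 1))) atTop (𝓝 0) := by
  set P : ℕ → ℝ := fun n => PsiA p α n (M n + 1) with hPdef
  set L : ℕ → ℝ := fun n => Real.log n with hLdef
  have hL : Tendsto L atTop atTop := Real.tendsto_log_atTop.comp tendsto_natCast_atTop_atTop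
  have hLL : Tendsto (fun n => Real.log (L n)) atTop atTop := Real.tendsto_log_atTop.comp hL
  have hc : 0 < Real.log (1 / p) := Real.log_pos (by rw [lt_div_iff₀ hp]; linarith)
  set c := Real.log (1 / p) with hcdef
  have hq : 0 < (1 - p) / p := div_pos (by linarith) hp
  have hd : Tendsto (fun n => (M n : ℝ) ^ 2 * Real.log (L n) / L n) atTop (𝓝 0) := by
    refine squeeze_zero' ?_ ?_ hm2
    · filter_upwards [hL.eventually_gt_atTop 0, hLL.eventually_ge_atTop 1] with n h1 h2
      positivity
    · filter_upwards [hL.eventually_gt_atTop 0, hLL.eventually_ge_atTop 1] with n h1 h2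
      have : 0 ≤ Real.log (L n) := by linarith
      push_cast
      change _ ≤ ((M n : ℝ) + 1) ^ 2 * Real.log (L n) / L n
      gcongr
      linarith
  have hd2 : Tendsto (fun n => (M n : ℝ) ^ 2 / L n) atTop (𝓝 0) := by
    refine squeeze_zero' ?_ ?_ hd
    · filter_upwards [hL.eventually_gt_atTop 0] with n h1
      positivity
    · filter_upwards [hL.eventually_gt_atTop 0, hLL.eventually_ge_atTop 1] with n h1 h2
      gcongr
      nlinarith [sq_nonneg (M n : ℝ)]
  have hMsq : ∀ n, (M n : ℝ) ≤ (M n : ℝ) ^ 2 := fun n => by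
    exact_mod_cast Nat.le_self_pow two_ne_zero (M n)
  have hd1 : Tendsto (fun n => (M n : ℝ) / L n) atTop (𝓝 0) := by
    refine squeeze_zero' ?_ ?_ hd2
    · filter_upwards [hL.eventually_gt_atTop 0] with n h1
      positivity
    · filter_upwards [hL.eventually_gt_atTop 0] with n h1
      gcongr
      exact hMsq n
  have hK : 0 < α / c := div_pos hα hc
  have hPL : Tendsto (fun n => P n / L n) atTop (𝓝 (α / c)) := by
    have h := (hd1.mul_const (Real.logb (1 / p) ((1 - p) / p))).const_add (α / c)
    simp only [zero_mul, add_zero] at h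
    refine h.congr' ?_
    filter_upwards [hL.eventually_gt_atTop 0] with n h1
    have e : P n = α * (L n / c) + (M n : ℝ) * Real.logb (1 / p) ((1 - p) / p) := by
      simp only [hPdef, PsiA, Nat.cast_add, Nat.cast_one, add_sub_cancel_right, Real.logb,
        hLdef, hcdef]
    rw [e]
    field_simp
  have hLP : Tendsto (fun n => L n / P n) atTop (𝓝 (α / c)⁻¹) := by
    refine (hPL.inv₀ hK.ne').congr fun n => ?_
    rw [inv_div]
  have hP : Tendsto P atTop atTop := by
    refine (hL.atTop_mul_pos hK hPL).congr' ?_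
    filter_upwards [hL.eventually_gt_atTop 0] with n h1
    field_simp
  have hM1 : Tendsto (fun n => (M n : ℝ) / P n) atTop (𝓝 0) := by
    have h := hd1.mul hLP
    rw [zero_mul] at h
    refine h.congr' ?_
    filter_upwards [hL.eventually_gt_atTop 0] with n h1
    field_simp
  have hM2 : Tendsto (fun n => (M n : ℝ) ^ 2 / P n) atTop (𝓝 0) := by
    have h := hd2.mul hLP
    rw [zero_mul] at h
    refine h.congr' ?_
    filter_upwards [hL.eventually_gt_atTop 0] with n h1
    field_simp
  -- `log Ψ = log (Ψ / log n) + log log n`, and the first summand stays bounded.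
  have hlogP : Tendsto (fun n => Real.log (P n) / Real.log (L n)) atTop (𝓝 1) := by
    have h := (((Real.continuousAt_log hK.ne').tendsto.comp hPL).div_atTop hLL).add_const 1
    rw [zero_add] at h
    refine h.congr' ?_
    filter_upwards [hL.eventually_gt_atTop 0, hLL.eventually_gt_atTop 0,
      hP.eventually_gt_atTop 0] with n h1 h2 h3
    simp only [Function.comp]
    rw [Real.log_div h3.ne' h1.ne']
    field_simp
    ring
  have hH1 : Tendsto (fun n => (M n : ℝ) ^ 2 * Real.logb (1 / p) (P n) / P n) atTop (𝓝 0) := by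
    have h := ((hd.mul hLP).mul hlogP).mul_const c⁻¹
    simp only [zero_mul] at h
    refine h.congr' ?_
    filter_upwards [hL.eventually_gt_atTop 0, hLL.eventually_gt_atTop 0,
      hP.eventually_gt_atTop 0] with n h1 h2 h3
    rw [Real.logb, ← hcdef]
    field_simp
  have hfac : Tendsto (fun n => (M n : ℝ) * Real.log (Nat.factorial (M n)) / L n)
      atTop (𝓝 0) := by
    have hfac0 : ∀ n, 0 ≤ Real.log (Nat.factorial (M n)) := fun n => by
      apply Real.log_nonneg
      exact_mod_cast Nat.factorial_pos (M n)
    refine squeeze_zero' ?_ ?_ hd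
    · filter_upwards [hL.eventually_gt_atTop 0] with n h1
      have := hfac0 n
      positivity
    · filter_upwards [hL.eventually_gt_atTop 0, hLL.eventually_gt_atTop 0,
        hd1.eventually_lt_const zero_lt_one] with n h1 h2 h3
      rw [div_lt_one h1] at h3
      have h4 : Real.log (Nat.factorial (M n)) ≤ M n * Real.log (L n) := by
        rcases Nat.eq_zero_or_pos (M n) with h0 | h0
        · simp [h0]
        · have h5 : ((Nat.factorial (M n) : ℕ) : ℝ) ≤ (M n : ℝ) ^ (M n) := by
            exact_mod_cast Nat.factorial_le_pow (M n)
          have h6 : (0 : ℝ) < Nat.factorial (M n) := by exact_mod_cast Nat.factorial_pos _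
          have h7 := Real.log_le_log h6 h5
          rw [Real.log_pow] at h7
          have h8 : (0 : ℝ) < M n := by exact_mod_cast h0
          exact h7.trans (mul_le_mul_of_nonneg_left (Real.log_le_log h8 h3.le) h8.le)
      rw [sq, mul_assoc]
      gcongr
  have hH2 : Tendsto (fun n => (M n : ℝ) * Real.logb (1 / p) (Nat.factorial (M n)) / P n)
      atTop (𝓝 0) := by
    have h := (hfac.mul hLP).mul_const c⁻¹
    simp only [zero_mul] at h
    refine h.congr' ?_
    filter_upwards [hL.eventually_gt_atTop 0] with n h1
    rw [Real.logb, ← hcdef]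
    field_simp
  refine ⟨hP, hM1, hM2, ?_⟩
  have h := ((hH1.sub hH2).add (hM1.const_mul x)).sub hM2
  simp only [mul_zero, sub_zero, add_zero] at h
  refine h.congr' ?_
  filter_upwards [hP.eventually_gt_atTop 0] with n h1
  have e : phiFun p α x (fun k => M k + 1) n - M n - P n =
      M n * Real.logb (1 / p) (P n) - Real.logb (1 / p) (Nat.factorial (M n)) + x - M n := by
    have h2 : PsiA p α n (M n + 1) = P n := rfl
    simp only [phiFun, h2]
    rw [Real.logb_mul hq.ne' h1.ne']
    simp only [hPdef, PsiA, Nat.cast_add, Nat.cast_one, add_sub_cancel_right, Nat.add_sub_cancel]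
    ring
  change _ = (M n : ℝ) * ((phiFun p α x (fun k => M k + 1) n - M n - P n) / P n)
  rw [e]
  field_simp

/-- Under `m_n → ∞` and `m_n² log log n / log n → 0`,
`n^α · F̄_c(φ(n) | m_n, p) → p^x`. -/
theorem claim_tail_asymptotics (p α x : ℝ) (hp : 0 < p) (hp1 : p < 1) (hα : 0 < α)
    (m : ℕ → ℕ) (hm : ∀ n, 1 ≤ m n)
    (hm1 : Filter.Tendsto m Filter.atTop Filter.atTop)
    (hm2 : Filter.Tendsto
      (fun n : ℕ => (m n : ℝ) ^ 2 * Real.log (Real.log n) / Real.log n)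
      Filter.atTop (nhds 0)) :
    Filter.Tendsto (fun n : ℕ => (n : ℝ) ^ α * FcBar p (m n) (phiFun p α x m n))
      Filter.atTop (nhds (p ^ x)) := by
  obtain ⟨M, rfl⟩ : ∃ M : ℕ → ℕ, m = fun n => M n + 1 :=
    ⟨fun n => m n - 1, funext fun n => (Nat.sub_add_cancel (hm n)).symm⟩
  beta_reduce at hm1 hm2 ⊢
  obtain ⟨hP, hM1, hM2, hD⟩ := asymptotics (x := x) hp hp1 hα M hm2
  have hMge : ∀ᶠ n in Filter.atTop, 1 ≤ M n := by
    filter_upwards [hm1.eventually_ge_atTop 2] with n h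
    omega
  have hq : 0 < 1 - p := by linarith
  set P : ℕ → ℝ := fun n => PsiA p α n (M n + 1) with hPdef
  set y : ℕ → ℝ := fun n => phiFun p α x (fun k => M k + 1) n with hydef
  -- Eventually `a ≥ Ψ / 2`, so `M / (a q) ≤ r` for this `r`, the geometric ratio.
  set r : ℕ → ℝ := fun n => 2 / (1 - p) * ((M n : ℝ) / P n) with hrdef
  have hr : Filter.Tendsto r Filter.atTop (nhds 0) := by
    simpa using hM1.const_mul (2 / (1 - p))
  have hlow : Filter.Tendsto (fun n => p ^ x * (1 + M n * ((y n - M n - P n) / P n)))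
      Filter.atTop (nhds (p ^ x)) := by
    simpa using (hD.const_add 1).const_mul (p ^ x)
  have hup : Filter.Tendsto (fun n => p ^ x *
      Real.exp (M n * ((y n - M n - P n) / P n) + (M n : ℝ) ^ 2 / P n) / (1 - r n))
      Filter.atTop (nhds (p ^ x)) := by
    have h1 := (Real.continuous_exp.tendsto 0).comp (by simpa using hD.add hM2)
    have h2 := (h1.const_mul (p ^ x)).div (hr.const_sub 1) (by norm_num)
    simp only [Real.exp_zero, mul_one, sub_zero, div_one] at h2
    exact h2
  have hmain : ∀ᶠ n : ℕ in Filter.atTop,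
      p ^ x * (1 + M n * ((y n - M n - P n) / P n)) ≤ (n : ℝ) ^ α * FcBar p (M n + 1) (y n) ∧
      (n : ℝ) ^ α * FcBar p (M n + 1) (y n) ≤ p ^ x *
        Real.exp (M n * ((y n - M n - P n) / P n) + (M n : ℝ) ^ 2 / P n) / (1 - r n) := by
    filter_upwards [hP.eventually_gt_atTop 2, hMge, Filter.eventually_gt_atTop 0,
      hD.eventually_const_lt (show (-(1 / 2) : ℝ) < 0 by norm_num),
      hr.eventually_lt_const zero_lt_one] with n h1 h2 hn h3 h4
    change 2 < P n at h1
    change -(1 / 2) < (M n : ℝ) * ((y n - M n - P n) / P n) at h3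
    have hP0 : 0 < P n := by linarith
    have hM1' : (1 : ℝ) ≤ M n := by exact_mod_cast h2
    have hn0 : (0 : ℝ) < n := by exact_mod_cast hn
    have ha2 : P n / 2 < y n - M n := by
      have h5 : -(1 / 2) < (y n - M n - P n) / P n := by
        by_contra! h
        nlinarith
      rw [lt_div_iff₀ hP0] at h5
      linarith
    have ha : 1 < y n - M n := by linarith
    have ha0 : 0 < y n - M n := by linarith
    have hy : y n = α * Real.logb (1 / p) n +
        M n * Real.logb (1 / p) ((1 - p) / p * P n) -
        Real.logb (1 / p) (Nat.factorial (M n)) + x := by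
      simp [hydef, hPdef, phiFun]
    have hmt := main_term hp hp1 (M n) hn0 hP0 hy
    have hs1 := tailSum_ge ha0 hq (M n)
    have hs2 := tailSum_le ha0 hq (M n) h4 (by
      have : (M n : ℝ) = r n * (P n / 2 * (1 - p)) := by
        simp only [hrdef]; field_simp
      have hr0 : 0 ≤ r n := by simp only [hrdef]; positivity
      calc (M n : ℝ) = r n * (P n / 2 * (1 - p)) := this
        _ ≤ r n * ((y n - M n) * (1 - p)) := by gcongr)
    have hpx : 0 < p ^ x := Real.rpow_pos_of_pos hp x
    have hpa : 0 < p ^ (y n - M n) := Real.rpow_pos_of_pos hp _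
    have hr1 : 0 < 1 - r n := by linarith
    rw [FcBar_eq hp (M n) ha]
    constructor
    · calc p ^ x * (1 + M n * ((y n - M n - P n) / P n))
          ≤ p ^ x * ∏ i ∈ Finset.range (M n), ((y n - M n + i) / P n) := by
            gcongr; exact prod_ge ha0 hP0 (M n)
        _ = _ := hmt.symm
        _ ≤ _ := by gcongr
    · calc (n : ℝ) ^ α * (p ^ (y n - M n) *
            ∑ j ∈ Finset.range (M n + 1), riseCoeff (y n - M n) j * (1 - p) ^ j)
          ≤ (n : ℝ) ^ α * (p ^ (y n - M n) *
            (riseCoeff (y n - M n) (M n) * (1 - p) ^ (M n) / (1 - r n))) := by gcongr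
        _ = p ^ x * (∏ i ∈ Finset.range (M n), ((y n - M n + i) / P n)) / (1 - r n) := by
            rw [← hmt]; ring
        _ ≤ _ := by
            gcongr; exact prod_le ha0 hP0 (M n)
  exact tendsto_of_tendsto_of_tendsto_of_le_of_le' hlow hup
    (hmain.mono fun n h => h.1) (hmain.mono fun n h => h.2)
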